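/- arXiv:0811.0932 — 3 statements merged into one kernel-verified Lean document; each statement's English description precedes it below -/
import Mathlib

section
/- Let K be any symmetric 3×3 real matrix. Then e^u · ( 2·D_Hρ(u,w,H)[K] − ρ(u,w,H)·Σ_{i,j} h_{ij} K_{ij} ) = Σ_{i,j} τ_{ij} K_{ij}, where D_Hρ(u,w,H)[K] denotes the directional derivative of ρ with respect to its matrix argument at H in the direction K. (This is part (i) of the lemma expressing the stress–energy components in terms of derivatives of the reduced energy density ρ: e^U(2 ∂ρ/∂h^{ij} − ρ h_{ij}) = τ_{ij}.) -/
/-!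
The map `M ↦ Ĝ(u,w,M)` is affine, with linear part
`K ↦ e^{2u} (wᵀKw, -Kw; -Kw, K)`, so the chain rule gives
`D_Hρ[K] = e^{-u} (Λ_{00} wᵀKw - Σ_i (Λ_{0i} + Λ_{i0}) (Kw)_i + Σ_{ij} Λ_{ij} K_{ij})`, where
`Λ_{μν}` is the partial derivative of `Λ` at `Ĝ`. Since `Ĝ` is symmetric and `Λ` is invariant under
transposition, `Λ_{i0} = Λ_{0i}`. On the other side
`τ_{ij} = T_{ij} - T_{0i} w_j - T_{0j} w_i + T_{00} w_i w_j`; the derivative part of `T` reproduces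
the expression above, and the same combination of the `g_{μν}` collapses to `e^{-2u} h_{ij}`.
-/

noncomputable section

/-- The standard basis matrix `e_{μν}` of the space of 4×4 matrices. -/
def basisMat (μ ν : Fin 4) : Fin 4 → Fin 4 → ℝ := Pi.single μ (Pi.single ν 1)

/-- The inverse spacetime metric `Ĝ(u,w,H)`:
`Ĝ^{00} = −e^{−2u} + e^{2u}·wᵀHw`, `Ĝ^{0i} = Ĝ^{i0} = −e^{2u}(Hw)_i`, `Ĝ^{ij} = e^{2u}H_{ij}`. -/
def Ghat (u : ℝ) (w : Fin 3 → ℝ) (H : Fin 3 → Fin 3 → ℝ) : Fin 4 → Fin 4 → ℝ :=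
  Fin.cons
    (Fin.cons (-Real.exp (-(2*u)) + Real.exp (2*u) * ∑ i, ∑ j, w i * H i j * w j)
      (fun j : Fin 3 => -Real.exp (2*u) * ∑ k, H j k * w k))
    (fun i : Fin 3 => Fin.cons (-Real.exp (2*u) * ∑ k, H i k * w k)
      (fun j : Fin 3 => Real.exp (2*u) * H i j))

/-- The spacetime metric `g(u,w,H)`, with `h := H⁻¹`:
`g_{00} = −e^{2u}`, `g_{0i} = g_{i0} = −e^{2u}w_i`, `g_{ij} = e^{−2u}h_{ij} − e^{2u}w_i w_j`. -/
def gLow (u : ℝ) (w : Fin 3 → ℝ) (H : Fin 3 → Fin 3 → ℝ) : Fin 4 → Fin 4 → ℝ :=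
  Fin.cons
    (Fin.cons (-Real.exp (2*u)) (fun j : Fin 3 => -Real.exp (2*u) * w j))
    (fun i : Fin 3 => Fin.cons (-Real.exp (2*u) * w i)
      (fun j : Fin 3 => Real.exp (-(2*u)) * (Matrix.of H)⁻¹ i j - Real.exp (2*u) * w i * w j))

/-- The stress–energy matrix `T_{μν} = 2 ∂Λ/∂M_{μν}(Ĝ) − Λ(Ĝ) g_{μν}`. -/
def Tmat (Λ : (Fin 4 → Fin 4 → ℝ) → ℝ) (u : ℝ) (w : Fin 3 → ℝ)
    (H : Fin 3 → Fin 3 → ℝ) : Fin 4 → Fin 4 → ℝ :=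
  fun μ ν => 2 * fderiv ℝ Λ (Ghat u w H) (basisMat μ ν) - Λ (Ghat u w H) * gLow u w H μ ν

/-- `τ := T_{00}`. -/
def tau (Λ : (Fin 4 → Fin 4 → ℝ) → ℝ) (u : ℝ) (w : Fin 3 → ℝ) (H : Fin 3 → Fin 3 → ℝ) : ℝ :=
  Tmat Λ u w H 0 0

/-- `τ_i := T_{0i} − τ·w_i`. -/
def tauVec (Λ : (Fin 4 → Fin 4 → ℝ) → ℝ) (u : ℝ) (w : Fin 3 → ℝ) (H : Fin 3 → Fin 3 → ℝ)
    (i : Fin 3) : ℝ :=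
  Tmat Λ u w H 0 i.succ - tau Λ u w H * w i

/-- `τ_{ij} := T_{ij} − τ_i w_j − τ_j w_i − τ w_i w_j`. -/
def tauMat (Λ : (Fin 4 → Fin 4 → ℝ) → ℝ) (u : ℝ) (w : Fin 3 → ℝ) (H : Fin 3 → Fin 3 → ℝ)
    (i j : Fin 3) : ℝ :=
  Tmat Λ u w H i.succ j.succ - tauVec Λ u w H i * w j - tauVec Λ u w H j * w i
    - tau Λ u w H * w i * w j

/-- The reduced energy density `ρ(u,w,H) := e^{−3u} Λ(Ĝ(u,w,H))`. -/
def rho (Λ : (Fin 4 → Fin 4 → ℝ) → ℝ) (u : ℝ) (w : Fin 3 → ℝ) (H : Fin 3 → Fin 3 → ℝ) : ℝ :=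
  Real.exp (-(3*u)) * Λ (Ghat u w H)

/-- The linear part of the affine map `M ↦ Ĝ(u,w,M)`. -/
def ghatLin (u : ℝ) (w : Fin 3 → ℝ) : (Fin 3 → Fin 3 → ℝ) →ₗ[ℝ] (Fin 4 → Fin 4 → ℝ) where
  toFun M := Ghat u w M - Ghat u w 0
  map_add' M N := by
    ext μ ν
    refine Fin.cases ?_ (fun i => ?_) μ <;> refine Fin.cases ?_ (fun j => ?_) ν <;>
      simp [Ghat, Fin.sum_univ_three] <;> ring
  map_smul' c M := by
    ext μ ν
    refine Fin.cases ?_ (fun i => ?_) μ <;> refine Fin.cases ?_ (fun j => ?_) ν <;>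
      simp [Ghat, Fin.sum_univ_three] <;> ring

lemma hasFDerivAt_Ghat (u : ℝ) (w : Fin 3 → ℝ) (H : Fin 3 → Fin 3 → ℝ) :
    HasFDerivAt (Ghat u w) (LinearMap.toContinuousLinearMap (ghatLin u w)) H := by
  have h := (LinearMap.toContinuousLinearMap (ghatLin u w)).hasFDerivAt (x := H)
  have h2 := h.add_const (Ghat u w 0)
  have he : (fun M => LinearMap.toContinuousLinearMap (ghatLin u w) M + Ghat u w 0)
      = Ghat u w := by
    funext M
    simp [ghatLin]
  rwa [he] at h2

lemma fderiv_rho (Λ : (Fin 4 → Fin 4 → ℝ) → ℝ) (hΛ : ContDiff ℝ 1 Λ)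
    (u : ℝ) (w : Fin 3 → ℝ) (H K : Fin 3 → Fin 3 → ℝ) :
    fderiv ℝ (fun M : Fin 3 → Fin 3 → ℝ => rho Λ u w M) H K
      = Real.exp (-(3*u)) * fderiv ℝ Λ (Ghat u w H) (ghatLin u w K) := by
  have hd : DifferentiableAt ℝ Λ (Ghat u w H) := (hΛ.differentiable one_ne_zero) _
  have h := (hd.hasFDerivAt.comp H (hasFDerivAt_Ghat u w H)).const_mul (Real.exp (-(3*u)))
  have h' : HasFDerivAt (fun M : Fin 3 → Fin 3 → ℝ => rho Λ u w M) _ H := h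
  rw [h'.fderiv]
  simp

lemma Ghat_symm (u : ℝ) (w : Fin 3 → ℝ) (H : Fin 3 → Fin 3 → ℝ)
    (hHsymm : ∀ i j, H i j = H j i) : (fun μ ν => Ghat u w H ν μ) = Ghat u w H := by
  ext μ ν
  refine Fin.cases ?_ (fun i => ?_) μ <;> refine Fin.cases ?_ (fun j => ?_) ν <;>
    simp [Ghat]
  exact hHsymm j i

/-- Transposition, as a linear map. -/
def transposeLin : (Fin 4 → Fin 4 → ℝ) →ₗ[ℝ] (Fin 4 → Fin 4 → ℝ) where
  toFun M := fun μ ν => M ν μ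
  map_add' _ _ := rfl
  map_smul' _ _ := rfl

/-- At a symmetric point, the partial derivatives of a transposition-invariant function are
symmetric in their indices. -/
lemma fderiv_basisMat_symm (Λ : (Fin 4 → Fin 4 → ℝ) → ℝ) (hΛ : ContDiff ℝ 1 Λ)
    (hΛsymm : ∀ M : Fin 4 → Fin 4 → ℝ, Λ (fun μ ν => M ν μ) = Λ M)
    (G : Fin 4 → Fin 4 → ℝ) (hG : (fun μ ν => G ν μ) = G) (μ ν : Fin 4) :
    fderiv ℝ Λ G (basisMat μ ν) = fderiv ℝ Λ G (basisMat ν μ) := by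
  have hG' : LinearMap.toContinuousLinearMap transposeLin G = G := hG
  have hd : HasFDerivAt Λ (fderiv ℝ Λ G) (LinearMap.toContinuousLinearMap transposeLin G) := by
    rw [hG']; exact ((hΛ.differentiable one_ne_zero) _).hasFDerivAt
  have h := hd.comp G (LinearMap.toContinuousLinearMap transposeLin).hasFDerivAt
  have he : Λ ∘ (LinearMap.toContinuousLinearMap transposeLin) = Λ := funext hΛsymm
  rw [he] at h
  have hb : LinearMap.toContinuousLinearMap transposeLin (basisMat μ ν) = basisMat ν μ := by
    ext a b
    simp only [transposeLin, basisMat, LinearMap.coe_toContinuousLinearMap', LinearMap.coe_mk,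
      AddHom.coe_mk, Pi.single_apply]
    split_ifs <;> simp_all
  have h3 := congrArg (fun L => L (basisMat μ ν)) h.fderiv
  simpa [hb] using h3

lemma apply_eq_sum_basisMat (L : (Fin 4 → Fin 4 → ℝ) →L[ℝ] ℝ) (X : Fin 4 → Fin 4 → ℝ) :
    L X = ∑ μ, ∑ ν, X μ ν * L (basisMat μ ν) := by
  have hX : X = ∑ μ, ∑ ν, X μ ν • basisMat μ ν := by
    ext a b
    simp [basisMat, Finset.sum_apply, Pi.single_apply, ite_apply]
  conv_lhs => rw [hX]
  simp [map_sum]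

/-- Part (i) of the lemma: `e^U (2 ∂ρ/∂h^{ij} − ρ h_{ij}) = τ_{ij}`, contracted with an
arbitrary symmetric direction `K`. -/
theorem stmt_0 (Λ : (Fin 4 → Fin 4 → ℝ) → ℝ) (hΛ : ContDiff ℝ 1 Λ)
    (hΛsymm : ∀ M : Fin 4 → Fin 4 → ℝ, Λ (fun μ ν => M ν μ) = Λ M)
    (u : ℝ) (w : Fin 3 → ℝ) (H : Fin 3 → Fin 3 → ℝ)
    (hHsymm : ∀ i j, H i j = H j i) (hHinv : IsUnit (Matrix.of H).det)
    (K : Fin 3 → Fin 3 → ℝ) (hKsymm : ∀ i j, K i j = K j i) :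
    Real.exp u * (2 * fderiv ℝ (fun M : Fin 3 → Fin 3 → ℝ => rho Λ u w M) H K
        - rho Λ u w H * ∑ i, ∑ j, (Matrix.of H)⁻¹ i j * K i j)
      = ∑ i, ∑ j, tauMat Λ u w H i j * K i j := by
  have hS := fderiv_basisMat_symm Λ hΛ hΛsymm _ (Ghat_symm u w H hHsymm)
  rw [fderiv_rho Λ hΛ, apply_eq_sum_basisMat]
  simp only [tauMat, tauVec, tau, Tmat, rho]
  generalize fderiv ℝ Λ (Ghat u w H) = L at hS ⊢
  generalize Λ (Ghat u w H) = l
  generalize hh : (Matrix.of H)⁻¹ = h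
  have e3 : Real.exp (-(3*u)) = Real.exp (-u) * Real.exp (-(2*u)) := by
    rw [← Real.exp_add]; ring_nf
  have e1 : Real.exp u * Real.exp (-u) = 1 := by
    rw [← Real.exp_add]; simp
  have e2 : Real.exp (-(2*u)) * Real.exp (2*u) = 1 := by
    rw [← Real.exp_add]; simp
  rw [e3]
  -- The factor `e^{-2u}` cancels the `e^{2u}` in the linear part of `Ĝ`; after this no exponentials
  -- multiply the derivatives of `Λ`, and the claim is a polynomial identity.
  have hX : ∀ μ ν, Real.exp (-(2*u)) * ghatLin u w K μ ν
      = (Fin.cons (Fin.cons (∑ i, ∑ j, w i * K i j * w j) (fun j : Fin 3 => -∑ k, K j k * w k))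
        (fun i : Fin 3 => Fin.cons (-∑ k, K i k * w k) (fun j : Fin 3 => K i j)) :
          Fin 4 → Fin 4 → ℝ) μ ν := by
    intro μ ν
    refine Fin.cases ?_ (fun i => ?_) μ <;> refine Fin.cases ?_ (fun j => ?_) ν <;>
      simp [ghatLin, Ghat] <;> simp only [← mul_assoc, e2, one_mul]
  have hl : Real.exp u * (2 * (Real.exp (-u) * Real.exp (-(2*u)) *
        ∑ μ, ∑ ν, ghatLin u w K μ ν * L (basisMat μ ν))
        - Real.exp (-u) * Real.exp (-(2*u)) * l * ∑ i, ∑ j, h i j * K i j)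
      = 2 * ∑ μ, ∑ ν, (Real.exp (-(2*u)) * ghatLin u w K μ ν) * L (basisMat μ ν)
        - Real.exp (-(2*u)) * l * ∑ i, ∑ j, h i j * K i j := by
    simp only [mul_assoc (Real.exp (-(2*u))), ← Finset.mul_sum]
    linear_combination (2 * (Real.exp (-(2*u)) *
        ∑ μ, ∑ ν, ghatLin u w K μ ν * L (basisMat μ ν))
        - Real.exp (-(2*u)) * l * ∑ i, ∑ j, h i j * K i j) * e1
  rw [hl]
  simp only [hX, Fin.sum_univ_succ (n := 3), gLow, hh, Fin.cons_zero, Fin.cons_succ]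
  simp only [hS (Fin.succ _) 0]
  simp only [Fin.sum_univ_three, hKsymm 1 0, hKsymm 2 0, hKsymm 2 1]
  ring
end
end

section
/- Let g be an invertible symmetric 4×4 real matrix, u ∈ ℝ⁴ a vector with uᵀ·g·u = −1, and F a real 3×4 matrix with F·u = 0. Suppose the 3×3 matrix γ := F·g⁻¹·Fᵀ is invertible. Then Fᵀ·γ⁻¹·F = g + (g·u)(g·u)ᵀ, i.e. for all μ,ν ∈ {0,...,3}: (Fᵀγ⁻¹F)_{μν} = g_{μν} + (gu)_μ (gu)_ν. (This is the identity γ_{AB} f^A{}_{,μ} f^B{}_{,ν} = g_{μν} + u_μ u_ν underlying the decomposition T_{μν} = Λ u_μ u_ν + S_{μν} of the stress–energy tensor of an elastic material with unit timelike velocity field u annihilated by the configuration gradient.) -/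
/-!
The `4 × (3 + 1)` matrix `P = [g⁻¹ Fᵀ | u]` has the left inverse `Q = [γ⁻¹ F ; -(g u)ᵀ]`:
the diagonal blocks of `Q P` are `γ⁻¹ γ = 1` and `-uᵀ g u = 1`, and the off-diagonal ones vanish
because `F u = 0`. Both matrices are square of size `4`, so also `P Q = 1`, that is
`g⁻¹ Fᵀ γ⁻¹ F - u (g u)ᵀ = 1`; multiplying by `g` from the left gives the identity.
-/

open Matrix

/-- The identity `γ_{AB} f^A{}_{,μ} f^B{}_{,ν} = g_{μν} + u_μ u_ν`: if `g` is an invertible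
symmetric 4×4 matrix, `uᵀ g u = −1`, `F u = 0`, and `γ := F g⁻¹ Fᵀ` is invertible, then
`Fᵀ γ⁻¹ F = g + (gu)(gu)ᵀ`. -/
theorem stmt_8 (g : Matrix (Fin 4) (Fin 4) ℝ) (hg_symm : g.IsSymm) (hg : IsUnit g.det)
    (u : Fin 4 → ℝ) (hu : u ⬝ᵥ g *ᵥ u = -1)
    (F : Matrix (Fin 3) (Fin 4) ℝ) (hFu : F *ᵥ u = 0)
    (hγ : IsUnit (F * g⁻¹ * Fᵀ).det) :
    Fᵀ * (F * g⁻¹ * Fᵀ)⁻¹ * F = g + vecMulVec (g *ᵥ u) (g *ᵥ u) := by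
  set γ := F * g⁻¹ * Fᵀ with hγ_def
  have h11 : γ⁻¹ * F * (g⁻¹ * Fᵀ) = 1 := by
    rw [Matrix.mul_assoc, ← Matrix.mul_assoc F, ← hγ_def, nonsing_inv_mul _ hγ]
  have h12 : γ⁻¹ * F * replicateCol (Fin 1) u = 0 := by
    rw [Matrix.mul_assoc, ← replicateCol_mulVec, hFu, replicateCol_zero, Matrix.mul_zero]
  have h21 : replicateRow (Fin 1) (-(g *ᵥ u)) * (g⁻¹ * Fᵀ) = 0 := by
    have h : (-(g *ᵥ u)) ᵥ* (g⁻¹ * Fᵀ) = 0 := by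
      -- symmetry of `g` turns the covector `(g u)ᵀ g⁻¹` into `uᵀ`
      rw [neg_vecMul, ← vecMul_transpose, hg_symm.eq, vecMul_vecMul, ← Matrix.mul_assoc,
        mul_nonsing_inv _ hg, Matrix.one_mul, vecMul_transpose, hFu, neg_zero]
    rw [← replicateRow_vecMul, h, replicateRow_zero]
  have h22 : replicateRow (Fin 1) (-(g *ᵥ u)) * replicateCol (Fin 1) u = 1 := by
    ext i j
    rw [replicateRow_mul_replicateCol_apply, neg_dotProduct, dotProduct_comm, hu, neg_neg,
      Subsingleton.elim i j, one_apply_eq]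
  have hQP : fromRows (γ⁻¹ * F) (replicateRow (Fin 1) (-(g *ᵥ u))) *
      fromCols (g⁻¹ * Fᵀ) (replicateCol (Fin 1) u) = 1 := by
    rw [fromRows_mul_fromCols, h11, h12, h21, h22, fromBlocks_one]
  have hPQ : fromCols (g⁻¹ * Fᵀ) (replicateCol (Fin 1) u) *
      fromRows (γ⁻¹ * F) (replicateRow (Fin 1) (-(g *ᵥ u))) = 1 :=
    (fromCols_mul_fromRows_eq_one_comm (finSumFinEquiv (m := 3) (n := 1)).symm _ _ _ _).2 hQP
  have h_outer : replicateCol (Fin 1) u * replicateRow (Fin 1) (-(g *ᵥ u)) =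
      vecMulVec u (-(g *ᵥ u)) := by
    ext i j
    simp [Matrix.mul_apply, vecMulVec_apply]
  rw [fromCols_mul_fromRows, h_outer, vecMulVec_neg, ← sub_eq_add_neg, sub_eq_iff_eq_add]
    at hPQ
  have h := congrArg (g * ·) hPQ
  simpa only [Matrix.mul_add, Matrix.mul_one, mul_vecMulVec, ← Matrix.mul_assoc,
    mul_nonsing_inv _ hg, Matrix.one_mul] using h
end

section
/- Let U : ℝ³ → ℝ be continuously differentiable and ψ : ℝ³ → ℝ³ twice continuously differentiable; set ω_{ij} := (1/2)(∂_i ψ_j − ∂_j ψ_i) and define Ω̃_{ij} := e^{4U}[ (1/4) δ_{ij} Σ_{k,l} ω_{kl}ω_{kl} − Σ_k ω_{ik}ω_{jk} ]. Then for each i ∈ {1,2,3} and every point of ℝ³: Σ_j ∂_j Ω̃_{ij} = e^{4U}(∂_i U)·Σ_{k,l} ω_{kl}ω_{kl} − Σ_k ω_{ik}·Σ_j ∂_j( e^{4U} ω_{jk} ). (This is the divergence identity 8πG D^j Ω_{ij} = 2[e^{4U}(D_iU)ω_{kl}ω^{kl} − ω_{ik}D^j(e^{4U}ω_j{}^k)]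 for Ω_{ij} = (1/4πG)e^{4U}[¼ h_{ij}ω_{kl}ω^{kl} − ω_{ik}ω_j{}^k], specialized to the Euclidean metric h_{ij} = δ_{ij}, using that ω = dψ is closed.) -/
/-!
Expanding `∂_j` by the product rule, the terms in which `∂_j` hits `e^{4U} ω_{jk}` match the last
sum on the right, and the terms from `∂_i e^{4U}` match the first. What remains is
`½ Σ ω_{kl} ∂_i ω_{kl} = Σ ω_{jk} ∂_j ω_{ik}`, an algebraic consequence (`stress_algebra`) of the
antisymmetry of `ω` and of its closedness `∂_i ω_{jk} + ∂_j ω_{ki} + ∂_k ω_{ij} = 0` (`pd_om_cyclic`),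
which itself is the symmetry of the second derivatives of `ψ`.
-/

noncomputable section

/-- The partial derivative `∂_i f` of a scalar function on `ℝ³`. -/
def pd (i : Fin 3) (f : (Fin 3 → ℝ) → ℝ) (x : Fin 3 → ℝ) : ℝ :=
  fderiv ℝ f x (Pi.single i 1)

/-- `ω_{ij} = ∂_{[i}ψ_{j]} = ½(∂_iψ_j − ∂_jψ_i)`. -/
def om (ψ : (Fin 3 → ℝ) → Fin 3 → ℝ) (i j : Fin 3) (x : Fin 3 → ℝ) : ℝ :=
  (1/2) * (pd i (fun y => ψ y j) x - pd j (fun y => ψ y i) x)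

lemma pd_mul (j : Fin 3) {f g : (Fin 3 → ℝ) → ℝ} {x : Fin 3 → ℝ}
    (hf : DifferentiableAt ℝ f x) (hg : DifferentiableAt ℝ g x) :
    pd j (fun y => f y * g y) x = f x * pd j g x + g x * pd j f x := by
  simp [pd, fderiv_fun_mul hf hg]

lemma pd_sub (j : Fin 3) {f g : (Fin 3 → ℝ) → ℝ} {x : Fin 3 → ℝ}
    (hf : DifferentiableAt ℝ f x) (hg : DifferentiableAt ℝ g x) :
    pd j (fun y => f y - g y) x = pd j f x - pd j g x := by
  simp [pd, fderiv_fun_sub hf hg]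

lemma pd_const_mul (j : Fin 3) (c : ℝ) {f : (Fin 3 → ℝ) → ℝ} {x : Fin 3 → ℝ}
    (hf : DifferentiableAt ℝ f x) :
    pd j (fun y => c * f y) x = c * pd j f x := by
  simp [pd, fderiv_const_mul hf]

lemma pd_sum (j : Fin 3) {f : Fin 3 → (Fin 3 → ℝ) → ℝ} {x : Fin 3 → ℝ}
    (hf : ∀ k, DifferentiableAt ℝ (f k) x) :
    pd j (fun y => ∑ k, f k y) x = ∑ k, pd j (f k) x := by
  simp [pd, fderiv_fun_sum (fun k _ => hf k)]

lemma pd_exp (j : Fin 3) {U : (Fin 3 → ℝ) → ℝ} {x : Fin 3 → ℝ} (hU : DifferentiableAt ℝ U x) :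
    pd j (fun y => Real.exp (4 * U y)) x = 4 * Real.exp (4 * U x) * pd j U x := by
  have h : DifferentiableAt ℝ (fun y => 4 * U y) x := hU.const_mul 4
  simp only [pd, fderiv_exp h, fderiv_const_mul hU]
  simp
  ring

lemma differentiable_pd {f : (Fin 3 → ℝ) → ℝ} (hf : ContDiff ℝ 2 f) (i : Fin 3) :
    Differentiable ℝ (pd i f) := by
  have h : Differentiable ℝ (fderiv ℝ f) :=
    (hf.fderiv_right (m := 1) (by norm_num)).differentiable (by norm_num)
  unfold pd
  fun_prop

lemma pd_comm {f : (Fin 3 → ℝ) → ℝ} (hf : ContDiff ℝ 2 f) (i j : Fin 3) (x : Fin 3 → ℝ) :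
    pd i (pd j f) x = pd j (pd i f) x := by
  have h : DifferentiableAt ℝ (fderiv ℝ f) x :=
    (hf.fderiv_right (m := 1) (by norm_num)).differentiable (by norm_num) x
  have hs : IsSymmSndFDerivAt ℝ f x := hf.contDiffAt.isSymmSndFDerivAt (by simp)
  have key : ∀ a b : Fin 3, pd a (pd b f) x
      = fderiv ℝ (fderiv ℝ f) x (Pi.single a 1) (Pi.single b 1) := by
    intro a b
    change fderiv ℝ (fun y => fderiv ℝ f y (Pi.single b 1)) x (Pi.single a 1) = _
    rw [fderiv_clm_apply h (differentiableAt_const _)]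
    simp
  rw [key, key]
  exact hs _ _

lemma differentiable_om {ψ : (Fin 3 → ℝ) → Fin 3 → ℝ} (hψ : ContDiff ℝ 2 ψ) (i j : Fin 3) :
    Differentiable ℝ (om ψ i j) := by
  have h := fun a b => differentiable_pd (contDiff_pi.1 hψ a) b
  exact ((h j i).sub (h i j)).const_mul _

lemma om_antisymm (ψ : (Fin 3 → ℝ) → Fin 3 → ℝ) (i j : Fin 3) (x : Fin 3 → ℝ) :
    om ψ i j x = -om ψ j i x := by
  unfold om
  ring

lemma pd_om {ψ : (Fin 3 → ℝ) → Fin 3 → ℝ} (hψ : ContDiff ℝ 2 ψ) (k i j : Fin 3)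
    (x : Fin 3 → ℝ) :
    pd k (om ψ i j) x
      = (1/2) * (pd k (pd i (fun y => ψ y j)) x - pd k (pd j (fun y => ψ y i)) x) := by
  have h := fun a b => differentiable_pd (contDiff_pi.1 hψ a) b x
  change pd k (fun x => (1/2) * (pd i (fun y => ψ y j) x - pd j (fun y => ψ y i) x)) x = _
  rw [pd_const_mul k _ ((h j i).fun_sub (h i j)), pd_sub k (h j i) (h i j)]

/-- The two-form `ω = dψ` is closed. -/
lemma pd_om_cyclic {ψ : (Fin 3 → ℝ) → Fin 3 → ℝ} (hψ : ContDiff ℝ 2 ψ) (i j k : Fin 3)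
    (x : Fin 3 → ℝ) :
    pd i (om ψ j k) x + pd j (om ψ k i) x + pd k (om ψ i j) x = 0 := by
  have h := contDiff_pi.1 hψ
  rw [pd_om hψ, pd_om hψ, pd_om hψ, pd_comm (h i) j k, pd_comm (h j) k i, pd_comm (h k) i j]
  ring

/-- The pointwise algebra behind the divergence identity: `w j k` stands for `ω_{jk}` and
`d i j k` for `∂_i ω_{jk}`. -/
lemma stress_algebra (w : Fin 3 → Fin 3 → ℝ) (d : Fin 3 → Fin 3 → Fin 3 → ℝ)
    (hw : ∀ j k, w j k = -w k j) (hd : ∀ i j k, d i j k = -d i k j)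
    (hc : ∀ i j k, d i j k + d j k i + d k i j = 0) (i : Fin 3) :
    (1/2) * ∑ k, ∑ l, w k l * d i k l = ∑ j, ∑ k, w j k * d j i k := by
  have h1 : ∑ j, ∑ k, w j k * d j i k = ∑ j, ∑ k, w k j * d k i j := Finset.sum_comm
  have h2 : ∑ k, ∑ l, w k l * d i k l
      = ∑ j, ∑ k, w j k * d j i k + ∑ j, ∑ k, w k j * d k i j := by
    simp only [← Finset.sum_add_distrib]
    refine Finset.sum_congr rfl fun j _ => Finset.sum_congr rfl fun k _ => ?_
    linear_combination w j k * hc i j k - w j k * hd j k i - d k i j * hw k j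
  linarith

/-- The divergence identity
`Σ_j ∂_j Ω̃_{ij} = e^{4U}(∂_iU) Σ_{k,l} ω_{kl}ω_{kl} − Σ_k ω_{ik} Σ_j ∂_j(e^{4U}ω_{jk})` for
`Ω̃_{ij} = e^{4U}[¼ δ_{ij} Σ_{k,l} ω_{kl}ω_{kl} − Σ_k ω_{ik}ω_{jk}]`, with `U` continuously
differentiable and `ψ` twice continuously differentiable. -/
theorem stmt_11 (U : (Fin 3 → ℝ) → ℝ) (hU : ContDiff ℝ 1 U)
    (ψ : (Fin 3 → ℝ) → Fin 3 → ℝ) (hψ : ContDiff ℝ 2 ψ) (i : Fin 3) (x : Fin 3 → ℝ) :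
    ∑ j, pd j (fun y => Real.exp (4 * U y) *
        ((1/4) * (if i = j then (1:ℝ) else 0) * (∑ k, ∑ l, om ψ k l y * om ψ k l y)
          - ∑ k, om ψ i k y * om ψ j k y)) x
      = Real.exp (4 * U x) * pd i U x * (∑ k, ∑ l, om ψ k l x * om ψ k l x)
        - ∑ k, om ψ i k x * ∑ j, pd j (fun y => Real.exp (4 * U y) * om ψ j k y) x := by
  have hω := fun a b => differentiable_om hψ a b x
  have hU' : DifferentiableAt ℝ U x := hU.differentiable (by norm_num) x
  have hE : DifferentiableAt ℝ (fun y => Real.exp (4 * U y)) x := (hU'.const_mul 4).exp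
  have hmul := fun a b c d => (hω a b).fun_mul (hω c d)
  have hQ : DifferentiableAt ℝ (fun y => ∑ k, ∑ l, om ψ k l y * om ψ k l y) x := by fun_prop
  have hP : ∀ j, DifferentiableAt ℝ (fun y => ∑ k, om ψ i k y * om ψ j k y) x := by
    intro j
    fun_prop
  have hdQ : ∀ j, pd j (fun y => ∑ k, ∑ l, om ψ k l y * om ψ k l y) x
      = 2 * ∑ k, ∑ l, om ψ k l x * pd j (om ψ k l) x := by
    intro j
    rw [pd_sum j (fun k => by fun_prop), Finset.mul_sum]
    refine Finset.sum_congr rfl fun k _ => ?_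
    rw [pd_sum j (fun l => hmul k l k l), Finset.mul_sum]
    refine Finset.sum_congr rfl fun l _ => ?_
    rw [pd_mul j (hω k l) (hω k l)]
    ring
  have hdP : ∀ j, pd j (fun y => ∑ k, om ψ i k y * om ψ j k y) x
      = ∑ k, om ψ i k x * pd j (om ψ j k) x + ∑ k, om ψ j k x * pd j (om ψ i k) x := by
    intro j
    rw [pd_sum j (fun k => hmul i k j k), ← Finset.sum_add_distrib]
    exact Finset.sum_congr rfl fun k _ => pd_mul j (hω i k) (hω j k)
  have hL : ∀ j, pd j (fun y => Real.exp (4 * U y) *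
        ((1/4) * (if i = j then (1:ℝ) else 0) * (∑ k, ∑ l, om ψ k l y * om ψ k l y)
          - ∑ k, om ψ i k y * om ψ j k y)) x
      = (if i = j then Real.exp (4 * U x) * pd j U x * (∑ k, ∑ l, om ψ k l x * om ψ k l x)
          + Real.exp (4 * U x) * ((1/2) * ∑ k, ∑ l, om ψ k l x * pd j (om ψ k l) x) else 0)
        - Real.exp (4 * U x) * ∑ k, om ψ j k x * pd j (om ψ i k) x
        - ∑ k, om ψ i k x * pd j (fun y => Real.exp (4 * U y) * om ψ j k y) x := by
    intro j
    have hR : ∑ k, om ψ i k x * pd j (fun y => Real.exp (4 * U y) * om ψ j k y) x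
        = Real.exp (4 * U x) * ∑ k, om ψ i k x * pd j (om ψ j k) x
          + 4 * Real.exp (4 * U x) * pd j U x * ∑ k, om ψ i k x * om ψ j k x := by
      rw [Finset.mul_sum, Finset.mul_sum, ← Finset.sum_add_distrib]
      refine Finset.sum_congr rfl fun k _ => ?_
      rw [pd_mul j hE (hω j k), pd_exp j hU']
      ring
    rw [hR, pd_mul j hE ((hQ.const_mul _).fun_sub (hP j)), pd_sub j (hQ.const_mul _) (hP j),
      pd_const_mul j _ hQ, hdQ, hdP, pd_exp j hU']
    split_ifs <;> ring
  have hd : ∀ a j k, pd a (om ψ j k) x = -pd a (om ψ k j) x := by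
    intro a j k
    rw [pd_om hψ, pd_om hψ]
    ring
  have key := stress_algebra (fun j k => om ψ j k x) (fun a j k => pd a (om ψ j k) x)
    (fun j k => om_antisymm ψ j k x) hd (fun a j k => pd_om_cyclic hψ a j k x) i
  simp only [hL, Finset.sum_sub_distrib, Finset.sum_ite_eq, Finset.mem_univ, if_true,
    ← Finset.mul_sum]
  rw [key, Finset.sum_comm (f := fun j k =>
    om ψ i k x * pd j (fun y => Real.exp (4 * U y) * om ψ j k y) x)]
  simp only [← Finset.mul_sum]
  ring
end
end
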